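/- arXiv:2003.04990 — 6 statements merged into one kernel-verified Lean document; each statement's English description precedes it below -/
import Mathlib

section
/- Let d ≥ 1 be an integer. For all sufficiently large N (in terms of d), the hat guessing number of the graph G_d(N) equals s_d − 1, where s_d is the d-th term of Sylvester's sequence. -/
/-- A winning guessing strategy in the hat guessing game on `G` with `q` colors:
each vertex `v` gets a guessing function from colorings of its open neighborhood
to colors, such that for every coloring some vertex guesses its own color. -/
def HatWinning {V : Type*} (G : SimpleGraph V) (q : ℕ) : Prop :=
  ∃ g : (v : V) → ({w : V // G.Adj v w} → Fin q) → Fin q,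
    ∀ χ : V → Fin q, ∃ v : V, g v (fun w => χ w.1) = χ v

/-- The hat guessing number of `G`: the largest number of colors for which the
players have a winning strategy. -/
noncomputable def hatGuessingNumber {V : Type*} (G : SimpleGraph V) : ℕ :=
  sSup {q : ℕ | HatWinning G q}

/-- Sylvester's sequence: `s 0 = 2`, `s (n+1) = s n ^ 2 - s n + 1`. -/
def sylvester : ℕ → ℕ
  | 0 => 2
  | n + 1 => sylvester n ^ 2 - sylvester n + 1

/-- The graph `G_d(N)`: vertices are the vertices of the complete rooted `N`-ary
tree of depth `d` (encoded as lists of child-indices of length at most `d`), and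
each vertex is adjacent to all of its ancestors (its proper prefixes). -/
def ancTree (d N : ℕ) : SimpleGraph {l : List (Fin N) // l.length ≤ d} where
  Adj v w := v ≠ w ∧ (v.1 <+: w.1 ∨ w.1 <+: v.1)
  symm := by
    constructor
    intro v w h
    exact ⟨h.1.symm, h.2.symm⟩
  loopless := by
    constructor
    intro v h
    exact h.1 rfl

/-- The book graph `B_{d,n}`: a spine of `d` vertices forming a clique, completely
joined to `n` pages forming an independent set. -/
def bookGraph (d n : ℕ) : SimpleGraph (Fin d ⊕ Fin n) where
  Adj x y := x ≠ y ∧ (x.isLeft ∨ y.isLeft)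
  symm := by
    constructor
    intro x y h
    exact ⟨h.1.symm, h.2.symm⟩
  loopless := by
    constructor
    intro x h
    exact h.1 rfl

/-- A set `S ⊆ ℕ^d` is coverable if it can be partitioned into parts `S_1, …, S_d`
such that `S_i` contains at most one point on every line parallel to the `i`-th
coordinate axis, i.e. two distinct points in part `i` differ in some coordinate
other than the `i`-th. -/
def Coverable {d : ℕ} (S : Set (Fin d → ℕ)) : Prop :=
  ∃ f : (Fin d → ℕ) → Fin d, ∀ x ∈ S, ∀ y ∈ S,
    x ≠ y → f x = f y → ∃ j : Fin d, j ≠ f x ∧ x j ≠ y j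

/-- `hcov d` is `h(ℕ^d)`: the largest `t` such that every `t`-element subset of
`ℕ^d` is coverable. -/
noncomputable def hcov (d : ℕ) : ℕ :=
  sSup {t : ℕ | ∀ S : Set (Fin d → ℕ), S.Finite → S.ncard = t → Coverable S}

/-- `p` is a left-to-right path with `k` edges in a graph on `Fin n` with the
natural vertex ordering: a strictly increasing sequence of `k+1` vertices in which
consecutive vertices are adjacent. -/
def IsLTRPath {n : ℕ} (G : SimpleGraph (Fin n)) (k : ℕ) (p : Fin (k + 1) → Fin n) : Prop :=
  StrictMono p ∧ ∀ i : Fin k, G.Adj (p i.castSucc) (p i.succ)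

/-- The depth of a vertex `v`: the largest number of edges in a left-to-right path
ending at `v`. -/
noncomputable def ltrDepth {n : ℕ} (G : SimpleGraph (Fin n)) (v : Fin n) : ℕ :=
  sSup {k : ℕ | ∃ p : Fin (k + 1) → Fin n, IsLTRPath G k p ∧ p (Fin.last k) = v}

/-!
Call a graph *winnable in `t` tries* if `t` strategies can be fixed in advance so that every
coloring is beaten by at least one of them. If `H` is winnable in `t * (t + 1)` tries, then a new
vertex `r` joined to enough copies of `H` is winnable in `t` tries. Each copy picks its try for `H`
as a prescribed function of the current try and of the color of `r`, with one copy for every such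
function, so fewer than `t * (t + 1)` pairs (try, color of `r`) let all copies guess wrong. Hence at
most `t` colors of `r` are bad in all `t` tries, and `r` can guess all of these, one in each try.
Since `s_{k+1} - 1 = (s_k - 1) s_k`, this climbs the tree from a leaf, winnable with `s_d - 1`
colors in `s_d - 1` tries, to the root, where one try suffices.

For the upper bound, color the vertices from the leaves upwards, giving a vertex of depth `k` one
of `s_k` colors. Once its descendants are colored, its guess depends only on the colors of its
ancestors, so it takes at most `∏ j < k, s_j = s_k - 1` values, and some color is never guessed.
-/

section Sylvester

lemma two_le_sylvester (n : ℕ) : 2 ≤ sylvester n := by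
  induction n with
  | zero => exact le_rfl
  | succ n ih =>
    have : sylvester n + 1 ≤ sylvester n ^ 2 := by nlinarith
    simp only [sylvester]
    omega

lemma sylvester_succ_sub_one (n : ℕ) :
    sylvester (n + 1) - 1 = (sylvester n - 1) * sylvester n := by
  rw [sylvester, Nat.add_sub_cancel, Nat.sub_mul, one_mul, sq]

lemma sylvester_mono : Monotone sylvester := by
  refine monotone_nat_of_le_succ fun n => ?_
  have hsq : sylvester n * 2 ≤ sylvester n * sylvester n :=
    Nat.mul_le_mul_left _ (two_le_sylvester n)
  rw [sylvester, sq]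
  omega

lemma prod_range_sylvester (n : ℕ) : ∏ j ∈ Finset.range n, sylvester j = sylvester n - 1 := by
  induction n with
  | zero => rfl
  | succ n ih => rw [Finset.prod_range_succ, ih, sylvester_succ_sub_one]

end Sylvester

section UpperBound

variable {V : Type*} {G : SimpleGraph V} {q : ℕ}

/-- The adversary colors the vertices along `r`, giving `v` a color in `L v` that `v` never guesses,
whichever colors the lists allow on the neighbors still to be colored, which lie in `later v`. -/
theorem not_hatWinning_of_prod_card_lt {r : V → V → Prop} (hr : WellFounded r)
    (later : V → Finset V) (hadj : ∀ v w, G.Adj v w → r w v ∨ w ∈ later v)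
    (L : V → Finset (Fin q)) (hL : ∀ v, ∏ w ∈ later v, (L w).card < (L v).card) :
    ¬ HatWinning G q := by
  classical
  rintro ⟨g, hg⟩
  let guess (v : V) (c : ∀ w, r w v → Fin q) (p : ∀ w ∈ later v, Fin q) : Fin q :=
    g v fun w => if h : r w.1 v then c w.1 h else p w.1 ((hadj v w.1 w.2).resolve_left h)
  have exists_unguessed (v : V) (c : ∀ w, r w v → Fin q) :
      ∃ y ∈ L v, y ∉ ((later v).pi L).image (guess v c) :=
    Finset.exists_mem_notMem_of_card_lt_card <|
      Finset.card_image_le.trans_lt ((Finset.card_pi _ _).trans_lt (hL v))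
  choose color color_mem color_unguessed using exists_unguessed
  let χ : V → Fin q := hr.fix fun v c => color v c
  have χ_eq (v : V) : χ v = color v fun w _ => χ w := hr.fix_eq _ v
  have χ_mem (v : V) : χ v ∈ L v := χ_eq v ▸ color_mem v _
  obtain ⟨v, hv⟩ := hg χ
  refine color_unguessed v (fun w _ => χ w) (Finset.mem_image.mpr ⟨fun w _ => χ w, ?_, ?_⟩)
  · exact Finset.mem_pi.mpr fun w _ => χ_mem w
  · simp only [guess, dite_eq_ite, ite_self]
    exact hv.trans (χ_eq v)

/-- The proper ancestors of a vertex of `ancTree d N`, that is, its proper prefixes. -/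
def properAncestors {d N : ℕ} (v : {l : List (Fin N) // l.length ≤ d}) :
    Finset {l : List (Fin N) // l.length ≤ d} :=
  (Finset.range v.1.length).image fun j => ⟨v.1.take j, (v.1.length_take_le' j).trans v.2⟩

lemma prod_properAncestors {M : Type*} [CommMonoid M] {d N : ℕ}
    (v : {l : List (Fin N) // l.length ≤ d}) (f : ℕ → M) :
    ∏ w ∈ properAncestors v, f w.1.length = ∏ j ∈ Finset.range v.1.length, f j := by
  have length_take {j : ℕ} (hj : j ∈ Finset.range v.1.length) : (v.1.take j).length = j :=
    List.length_take_of_le (Finset.mem_range.mp hj).le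
  rw [properAncestors, Finset.prod_image]
  · exact Finset.prod_congr rfl fun j hj => congrArg f (length_take hj)
  · intro i hi j hj hij
    exact (length_take hi).symm.trans <|
      (congrArg (fun w => w.1.length) hij).trans (length_take hj)

lemma length_lt_or_mem_properAncestors_of_adj {d N : ℕ} {v w : {l : List (Fin N) // l.length ≤ d}}
    (h : (ancTree d N).Adj v w) : v.1.length < w.1.length ∨ w ∈ properAncestors v := by
  obtain ⟨hne, hvw | hwv⟩ := h
  · exact .inl <| hvw.length_le.lt_of_ne fun h => hne (Subtype.ext (hvw.eq_of_length h))
  · have hlt : w.1.length < v.1.length :=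
      hwv.length_le.lt_of_ne fun h => hne (Subtype.ext (hwv.eq_of_length h).symm)
    exact .inr <| Finset.mem_image.mpr
      ⟨_, Finset.mem_range.mpr hlt, Subtype.ext (List.prefix_iff_eq_take.mp hwv).symm⟩

lemma lt_sylvester_of_hatWinning_ancTree {d N : ℕ} (h : HatWinning (ancTree d N) q) :
    q < sylvester d := by
  by_contra! hq
  have exists_list (v : {l : List (Fin N) // l.length ≤ d}) :
      ∃ L : Finset (Fin q), L.card = sylvester v.1.length := by
    obtain ⟨L, -, hL⟩ := Finset.exists_subset_card_eq (s := (Finset.univ : Finset (Fin q)))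
      (by simpa using (sylvester_mono v.2).trans hq)
    exact ⟨L, hL⟩
  choose L hL using exists_list
  refine not_hatWinning_of_prod_card_lt (measure fun v => d - v.1.length).wf properAncestors
    (fun v w hvw => (length_lt_or_mem_properAncestors_of_adj hvw).imp_left fun hlt => ?_) L
    (fun v => ?_) h
  · exact Nat.sub_lt_sub_left (hlt.trans_le w.2) hlt
  · simp only [hL, prod_properAncestors, prod_range_sylvester]
    have := two_le_sylvester v.1.length
    omega

end UpperBound

section Tries

variable {V W : Type*} {G : SimpleGraph V} {H : SimpleGraph W} {q t : ℕ}

/-- A guessing strategy in the hat guessing game on `G` with `q` colors, encoded as in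
`HatWinning`. -/
abbrev HatStrategy (G : SimpleGraph V) (q : ℕ) : Type _ :=
  (v : V) → ({w : V // G.Adj v w} → Fin q) → Fin q

/-- The hat guessing game on `G` with `q` colors can be won in `t` tries: there are `t` strategies,
fixed in advance, such that every coloring is beaten by at least one of them. -/
def HatWinningInTries (G : SimpleGraph V) (q t : ℕ) : Prop :=
  ∃ g : Fin t → HatStrategy G q, ∀ χ : V → Fin q, ∃ a v, g a v (fun w => χ w.1) = χ v

lemma HatWinningInTries.hatWinning (h : HatWinningInTries G q 1) : HatWinning G q := by
  obtain ⟨g, hg⟩ := h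
  refine ⟨g 0, fun χ => ?_⟩
  obtain ⟨a, v, hv⟩ := hg χ
  exact ⟨v, Subsingleton.elim a 0 ▸ hv⟩

lemma hatWinningInTries_self [Nonempty V] (G : SimpleGraph V) (q : ℕ) :
    HatWinningInTries G q q :=
  ⟨fun a _ _ => a, fun χ => ⟨χ (Classical.arbitrary V), Classical.arbitrary V, rfl⟩⟩

lemma HatWinningInTries.of_iso (h : HatWinningInTries G q t) (e : G ≃g H) :
    HatWinningInTries H q t := by
  obtain ⟨g, hg⟩ := h
  have adj_of_adj_symm {x : W} {v : V} (hv : G.Adj (e.symm x) v) : H.Adj x (e v) := by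
    simpa using e.map_adj_iff.mpr hv
  refine ⟨fun a x c => g a (e.symm x) fun w => c ⟨e w.1, adj_of_adj_symm w.2⟩, fun χ => ?_⟩
  obtain ⟨a, v, hv⟩ := hg (χ ∘ e)
  refine ⟨a, e v, ?_⟩
  dsimp only
  rw [e.symm_apply_apply]
  exact hv

end Tries

section ConeOverCopies

lemma exists_surjOn_of_card_le {α β : Type*} [Nonempty β] {s : Finset α} {u : Finset β}
    (h : u.card ≤ s.card) : ∃ f : α → β, Set.SurjOn f s u := by
  rcases u.eq_empty_or_nonempty with rfl | hu
  · exact ⟨fun _ => Classical.arbitrary β, by simp [Set.surjOn_empty]⟩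
  have : Nonempty α := (Finset.card_pos.mp (hu.card_pos.trans_le h)).to_type
  obtain ⟨f, hfs, hf⟩ := u.finite_toSet.exists_injOn_of_encard_le (t := (s : Set α)) (by simpa)
  exact ⟨Function.invFunOn f u, hf.leftInvOn_invFunOn.surjOn hfs⟩

lemma card_mul_card_filter_forall_mem_le {α β : Type*} [Fintype α] [Fintype β]
    (B : Finset (α × β)) [DecidablePred fun b => ∀ a, (a, b) ∈ B] :
    Fintype.card α * ({b | ∀ a, (a, b) ∈ B} : Finset β).card ≤ B.card := by
  rw [← Finset.card_univ, ← Finset.card_product]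
  exact Finset.card_le_card fun p hp =>
    (Finset.mem_filter.mp (Finset.mem_product.mp hp).2).2 p.1

variable {V ι : Type*} {H : SimpleGraph V} {q t : ℕ}

/-- The graph obtained from disjoint copies of `H`, indexed by `ι`, by adding a vertex `none`
adjacent to all of their vertices. -/
def coneOverCopies (ι : Type*) (H : SimpleGraph V) : SimpleGraph (Option (ι × V)) where
  Adj
    | none, none => False
    | some (i, v), some (j, w) => i = j ∧ H.Adj v w
    | _, _ => True
  symm := ⟨by rintro (_ | ⟨i, v⟩) (_ | ⟨j, w⟩) h <;> simp_all [H.adj_comm]⟩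
  loopless := ⟨by rintro (_ | ⟨i, v⟩) h <;> simp_all⟩

open Classical in
/-- If `t` elements `p` failed in all copies, the label of some copy `i` would map them onto all `t`
strategies, one of which beats `χ i`. -/
lemma card_filter_forall_ne_lt {α : Type*} [Fintype α] (ht : 0 < t) {g : Fin t → HatStrategy H q}
    (hg : ∀ χ : V → Fin q, ∃ a v, g a v (fun w => χ w.1) = χ v)
    {label : ι → α → Fin t} (hlabel : label.Surjective) (χ : ι → V → Fin q) :
    ({p | ∀ i v, g (label i p) v (fun w => χ i w.1) ≠ χ i v} : Finset α).card < t := by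
  by_contra! hcard
  have : Nonempty (Fin t) := ⟨⟨0, ht⟩⟩
  obtain ⟨f, hf⟩ := exists_surjOn_of_card_le (u := (Finset.univ : Finset (Fin t)))
    (by simpa using hcard)
  obtain ⟨i, rfl⟩ := hlabel f
  obtain ⟨a, v, hv⟩ := hg (χ i)
  obtain ⟨p, hp, rfl⟩ := hf (Finset.mem_coe.mpr (Finset.mem_univ a))
  exact (Finset.mem_filter.mp hp).2 i v hv

theorem hatWinningInTries_coneOverCopies [NeZero q] (h : HatWinningInTries H q (t * (t + 1)))
    {label : ι → Fin t × Fin q → Fin (t * (t + 1))} (hlabel : label.Surjective) :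
    HatWinningInTries (coneOverCopies ι H) q t := by
  classical
  obtain ⟨g, hg⟩ := h
  let wrong (χ : ι → V → Fin q) : Finset (Fin t × Fin q) :=
    {p | ∀ i v, g (label i p) v (fun w => χ i w.1) ≠ χ i v}
  let bad (χ : ι → V → Fin q) : Finset (Fin q) := {y | ∀ a, (a, y) ∈ wrong χ}
  have card_wrong_lt (χ : ι → V → Fin q) : (wrong χ).card < t * (t + 1) :=
    card_filter_forall_ne_lt (hg 0).choose.pos hg hlabel χ
  have card_bad_le (χ : ι → V → Fin q) : (bad χ).card ≤ t := by
    have hcard := (card_mul_card_filter_forall_mem_le (wrong χ)).trans_lt (card_wrong_lt χ)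
    rw [Fintype.card_fin] at hcard
    exact Nat.lt_succ_iff.mp (lt_of_mul_lt_mul_left hcard (Nat.zero_le _))
  choose rootGuess surjOn_rootGuess using fun χ =>
    exists_surjOn_of_card_le (s := (Finset.univ : Finset (Fin t)))
      ((card_bad_le χ).trans_eq (Finset.card_fin t).symm)
  let strategy (a : Fin t) : HatStrategy (coneOverCopies ι H) q
    | none, c => rootGuess (fun i v => c ⟨some (i, v), trivial⟩) a
    | some (i, v), c => g (label i (a, c ⟨none, trivial⟩)) v fun w => c ⟨some (i, w.1), rfl, w.2⟩
  refine ⟨strategy, fun χ => ?_⟩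
  by_cases hbad : χ none ∈ bad fun i v => χ (some (i, v))
  · obtain ⟨a, -, ha⟩ := surjOn_rootGuess (fun i v => χ (some (i, v))) hbad
    exact ⟨a, none, ha⟩
  · simp only [bad, wrong, Finset.mem_filter_univ, not_forall, not_not] at hbad
    obtain ⟨a, i, v, hv⟩ := hbad
    exact ⟨a, some (i, v), hv⟩

end ConeOverCopies

section LowerBound

open Filter

lemma ancTree_adj_cons {d N : ℕ} {i j : Fin N} {l m : {l : List (Fin N) // l.length ≤ d}} :
    (ancTree (d + 1) N).Adj ⟨i :: l.1, Nat.succ_le_succ l.2⟩ ⟨j :: m.1, Nat.succ_le_succ m.2⟩ ↔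
      i = j ∧ (ancTree d N).Adj l m := by
  simp only [ancTree, ne_eq, Subtype.ext_iff, List.cons.injEq, List.cons_prefix_cons]
  tauto

/-- Removing the root of `ancTree (d + 1) N` leaves `N` disjoint copies of `ancTree d N`. -/
def coneOverCopiesIsoAncTree (d N : ℕ) :
    coneOverCopies (Fin N) (ancTree d N) ≃g ancTree (d + 1) N where
  toFun
    | none => ⟨[], Nat.zero_le _⟩
    | some (i, l) => ⟨i :: l.1, Nat.succ_le_succ l.2⟩
  invFun
    | ⟨[], _⟩ => none
    | ⟨i :: l, h⟩ => some (i, ⟨l, Nat.le_of_succ_le_succ h⟩)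
  left_inv := by rintro (_ | ⟨i, l⟩) <;> rfl
  right_inv := by rintro ⟨_ | ⟨i, l⟩, h⟩ <;> rfl
  map_rel_iff' := by
    rintro (_ | ⟨i, l⟩) (_ | ⟨j, m⟩)
    · simp [coneOverCopies]
    · simp [coneOverCopies, ancTree]
    · simp [coneOverCopies, ancTree]
    · exact ancTree_adj_cons

lemma eventually_exists_surjective (α : Type*) [Finite α] [Nonempty α] :
    ∀ᶠ N in atTop, ∃ f : Fin N → α, f.Surjective := by
  have := Fintype.ofFinite α
  filter_upwards [eventually_ge_atTop (Fintype.card α)] with N hN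
  exact Function.exists_surjective_iff.mpr ⟨⟨fun _ => Classical.arbitrary α⟩,
    Function.Embedding.nonempty_of_card_le (hN.trans_eq (Fintype.card_fin N).symm)⟩

theorem eventually_hatWinningInTries_ancTree (m d : ℕ) :
    ∀ᶠ N in atTop, HatWinningInTries (ancTree d N) (sylvester (m + d) - 1) (sylvester m - 1) := by
  induction d generalizing m with
  | zero =>
    have (N : ℕ) : Nonempty {l : List (Fin N) // l.length ≤ 0} := ⟨[], le_rfl⟩
    exact .of_forall fun N => hatWinningInTries_self _ _
  | succ d ih =>
    obtain ⟨t, ht⟩ : ∃ t, sylvester m = t + 1 :=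
      Nat.exists_eq_add_of_le' (one_le_two.trans (two_le_sylvester m))
    have htries : sylvester (m + 1) - 1 = t * (t + 1) := by
      rw [sylvester_succ_sub_one, ht, Nat.add_sub_cancel]
    have ih := ih (m + 1)
    rw [htries, Nat.add_right_comm, Nat.add_assoc m] at ih
    rw [ht, Nat.add_sub_cancel]
    have hcolors := two_le_sylvester (m + (d + 1))
    generalize hq : sylvester (m + (d + 1)) - 1 = q at ih ⊢
    have : NeZero q := ⟨by omega⟩
    have : NeZero (t * (t + 1)) := ⟨by have := two_le_sylvester (m + 1); omega⟩
    filter_upwards [ih, eventually_exists_surjective (Fin t × Fin q → Fin (t * (t + 1)))]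
      with N hN ⟨label, hlabel⟩
    exact (hatWinningInTries_coneOverCopies hN hlabel).of_iso (coneOverCopiesIsoAncTree d N)

theorem eventually_hatWinning_ancTree (d : ℕ) :
    ∀ᶠ N in atTop, HatWinning (ancTree d N) (sylvester d - 1) := by
  filter_upwards [eventually_hatWinningInTries_ancTree 0 d] with N hN
  rw [zero_add] at hN
  exact hN.hatWinning

end LowerBound

/-- Theorem 1 (He–Li): for every `d ≥ 1` and all sufficiently large `N`,
`HG(G_d(N)) = s_d - 1`, where `s` is Sylvester's sequence. -/
theorem hatGuessing_ancTree (d : ℕ) (hd : 1 ≤ d) :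
    ∃ N₀ : ℕ, ∀ N : ℕ, N₀ ≤ N →
      hatGuessingNumber (ancTree d N) = sylvester d - 1 := by
  obtain ⟨N₀, hN₀⟩ := Filter.eventually_atTop.mp (eventually_hatWinning_ancTree d)
  exact ⟨N₀, fun N hN => IsGreatest.csSup_eq
    ⟨hN₀ N hN, fun _ hq => Nat.le_sub_one_of_lt (lt_sylvester_of_hatWinning_ancTree hq)⟩⟩
end

section
/- Let d ≥ 2 and D ≥ 1 be integers, and let G be a finite simple graph admitting a d-degenerate vertex ordering of depth D. Then HG(G) < 2^{d^{D+1}}; equivalently, in the hat guessing game on G with 2^{d^{D+1}} colors, the players have no winning strategy. -/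
/-!
Give every vertex `v` a list `L v` of colors, and call the vertices of `back v` earlier than `v`.
Choose colors from the latest vertex to the earliest. When the turn of `v` comes, all its later
neighbors are colored, so if the earlier ones are colored from their lists, then `v` makes at most
`∏ w ∈ back v, #(L w)` different guesses. If `L v` is larger than this product, some color of `L v`
is never guessed, and with this color `v` guesses wrong whatever its earlier neighbors receive.

The depth strictly increases along edges from left to right, so it is a proper coloring of the graph
for which every vertex has at most `d` neighbors of smaller depth. Lists of size
`2 ^ d ^ (k + 1) - 1` at depth `k` are then long enough, because `(x - 1) ^ d < x ^ d - 1`.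
-/

open Finset

section ListColoring

variable {V α : Type*}

theorem exists_mem_forall_guess_piecewise_ne [DecidableEq V] (γ : (V → α) → α) (L : V → Finset α)
    {E : Finset V} {A : Finset α} (hA : ∏ w ∈ E, #(L w) < #A) (φ : V → α) :
    ∃ c ∈ A, ∀ ψ : V → α, (∀ w ∈ E, ψ w ∈ L w) → γ (E.piecewise ψ φ) ≠ c := by
  classical
  let guesses : Finset α :=
    (E.pi L).image fun p => γ fun w => if hw : w ∈ E then p w hw else φ w
  have card_guesses : #guesses < #A :=
    (card_image_le.trans_eq (card_pi E L)).trans_lt hA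
  obtain ⟨c, hcA, hc⟩ := exists_mem_notMem_of_card_lt_card card_guesses
  refine ⟨c, hcA, fun ψ hψ hguess => hc ?_⟩
  exact mem_image.2 ⟨fun w _ => ψ w, mem_pi.2 hψ, hguess⟩

variable {G : SimpleGraph V} {back : V → Finset V}

theorem exists_listColoring_forall_guess_ne
    (hwf : WellFounded fun w v => v ∈ back w)
    (hback : ∀ v w, G.Adj v w → w ∈ back v ∨ v ∈ back w)
    (L : V → Finset α) (hL : ∀ v, ∏ w ∈ back v, #(L w) < #(L v))
    (g : (v : V) → ({w : V // G.Adj v w} → α) → α) :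
    ∃ χ : V → α, (∀ v, χ v ∈ L v) ∧ ∀ v, g v (fun w => χ w.1) ≠ χ v := by
  classical
  choose c hcL hc using fun v =>
    exists_mem_forall_guess_piecewise_ne (fun ψ => g v fun w => ψ w.1) L (hL v)
  choose a _ using fun v => card_pos.1 ((Nat.zero_le _).trans_lt (hL v))
  let later (χ : V → α) (v w : V) : α := if v ∈ back w then χ w else a w
  obtain ⟨χ, hχ⟩ : ∃ χ : V → α, ∀ v, χ v = c v (later χ v) :=
    ⟨hwf.fix fun v ih => c v fun w => if hw : v ∈ back w then ih w hw else a w,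
      fun v => hwf.fix_eq _ v⟩
  have hχL : ∀ v, χ v ∈ L v := fun v => hχ v ▸ hcL v _
  refine ⟨χ, hχL, fun v => ?_⟩
  have hsees : ∀ w : {w : V // G.Adj v w}, (back v).piecewise χ (later χ v) w = χ w := by
    rintro ⟨w, hvw⟩
    by_cases hw : w ∈ back v
    · exact piecewise_eq_of_mem _ _ _ hw
    · rw [piecewise_eq_of_notMem _ _ _ hw]
      exact if_pos ((hback v w hvw).resolve_left hw)
  have hne := hc v (later χ v) χ fun w _ => hχL w
  rwa [← hχ, funext hsees] at hne

theorem not_hatWinning_of_prod_lt (hwf : WellFounded fun w v => v ∈ back w)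
    (hback : ∀ v w, G.Adj v w → w ∈ back v ∨ v ∈ back w) {q : ℕ} (h : V → ℕ)
    (hq : ∀ v, h v ≤ q) (hprod : ∀ v, ∏ w ∈ back v, h w < h v) : ¬ HatWinning G q := by
  rintro ⟨g, hg⟩
  let L : V → Finset (Fin q) := fun v => {c | (c : ℕ) < h v}
  have card_L : ∀ v, #(L v) = h v := fun v => by
    simp only [L, Fin.card_filter_val_lt, min_eq_right (hq v)]
  obtain ⟨χ, -, hχ⟩ := exists_listColoring_forall_guess_ne hwf hback L
    (fun v => by simpa only [card_L] using hprod v) g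
  obtain ⟨v, hv⟩ := hg χ
  exact hχ v hv

end ListColoring

theorem hatGuessingNumber_lt {V : Type*} {G : SimpleGraph V} {N : ℕ} (hN : 0 < N)
    (h : ∀ q, N ≤ q → ¬ HatWinning G q) : hatGuessingNumber G < N :=
  Nat.lt_of_le_pred hN <| csSup_le' fun q hq =>
    Nat.le_pred_of_lt <| not_le.1 fun hNq => h q hNq hq

theorem pow_add_pow_lt {R : Type*} [CommSemiring R] [PartialOrder R] [IsStrictOrderedRing R]
    {x y : R} (hx : 0 < x) (hy : 0 < y) {n : ℕ} (hn : 2 ≤ n) : x ^ n + y ^ n < (x + y) ^ n := by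
  obtain ⟨m, rfl⟩ := Nat.exists_eq_add_of_le' hn
  calc x ^ (m + 2) + y ^ (m + 2)
      < x ^ (m + 2) + y ^ (m + 2) + (x ^ (m + 1) * y + y ^ (m + 1) * x) :=
        lt_add_of_pos_right _ (by positivity)
    _ = (x ^ (m + 1) + y ^ (m + 1)) * (x + y) := by ring
    _ ≤ (x + y) ^ (m + 1) * (x + y) := by
        gcongr
        exact pow_add_pow_le hx.le hy.le m.succ_ne_zero
    _ = (x + y) ^ (m + 2) := (pow_succ _ _).symm

theorem two_pow_pow_sub_one_pow_lt {d : ℕ} (hd : 2 ≤ d) (k : ℕ) :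
    (2 ^ d ^ k - 1) ^ d < 2 ^ d ^ (k + 1) - 1 := by
  have hone : 1 < 2 ^ d ^ k := Nat.one_lt_two_pow (by positivity)
  have hlt := pow_add_pow_lt (Nat.sub_pos_of_lt hone) one_pos hd
  rw [Nat.sub_add_cancel hone.le, one_pow, ← pow_mul, ← pow_succ] at hlt
  exact Nat.lt_sub_of_add_lt hlt

theorem prod_two_pow_pow_sub_one_lt {ι : Type*} {d : ℕ} (hd : 2 ≤ d) {s : Finset ι} (hs : #s ≤ d)
    {f : ι → ℕ} {k : ℕ} (hf : ∀ i ∈ s, f i < k) :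
    ∏ i ∈ s, (2 ^ d ^ (f i + 1) - 1) < 2 ^ d ^ (k + 1) - 1 := by
  have hone : 1 < 2 ^ d ^ k := Nat.one_lt_two_pow (by positivity)
  calc ∏ i ∈ s, (2 ^ d ^ (f i + 1) - 1)
      ≤ (2 ^ d ^ k - 1) ^ #s := prod_le_pow_card _ _ _ fun i hi => by
        gcongr
        · exact one_le_two
        · exact one_le_two.trans hd
        · exact hf i hi
    _ ≤ (2 ^ d ^ k - 1) ^ d := Nat.pow_le_pow_right (Nat.sub_pos_of_lt hone) hs
    _ < 2 ^ d ^ (k + 1) - 1 := two_pow_pow_sub_one_pow_lt hd k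

theorem not_hatWinning_of_coloring {V : Type*} {G : SimpleGraph V} {d k q : ℕ} (hd : 2 ≤ d)
    (C : G.Coloring (Fin k)) (hdeg : ∀ v, {w | G.Adj v w ∧ C w < C v}.encard ≤ d)
    (hq : 2 ^ d ^ k - 1 ≤ q) : ¬ HatWinning G q := by
  have hfin v : {w | G.Adj v w ∧ C w < C v}.Finite := Set.finite_of_encard_le_coe (hdeg v)
  have mem_back {v w} : w ∈ (hfin v).toFinset ↔ G.Adj v w ∧ C w < C v := (hfin v).mem_toFinset
  refine not_hatWinning_of_prod_lt (back := fun v => (hfin v).toFinset)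
    (h := fun v => 2 ^ d ^ ((C v : ℕ) + 1) - 1) ?wf (fun v w hvw => ?back) (fun v => ?le_q)
    fun v => ?prod
  case wf => exact Subrelation.wf (fun hwv => (mem_back.1 hwv).2) (InvImage.wf C wellFounded_gt)
  case back =>
    exact (C.valid hvw).lt_or_gt.symm.imp (fun h => mem_back.2 ⟨hvw, h⟩)
      fun h => mem_back.2 ⟨hvw.symm, h⟩
  case le_q =>
    refine le_trans ?_ hq
    gcongr
    · exact one_le_two
    · exact one_le_two.trans hd
    · exact (C v).2
  case prod =>
    have hcard : #(hfin v).toFinset ≤ d := by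
      exact_mod_cast (hfin v).encard_eq_coe_toFinset_card ▸ hdeg v
    exact prod_two_pow_pow_sub_one_lt hd hcard fun w hw => (mem_back.1 hw).2

section Depth

variable {n : ℕ} {G : SimpleGraph (Fin n)}

theorem IsLTRPath.length_lt {k : ℕ} {p : Fin (k + 1) → Fin n} (hp : IsLTRPath G k p) : k < n := by
  simpa using Fintype.card_le_of_injective p hp.1.injective

theorem IsLTRPath.snoc {k : ℕ} {p : Fin (k + 1) → Fin n} (hp : IsLTRPath G k p) {w : Fin n}
    (hlt : p (Fin.last k) < w) (hadj : G.Adj (p (Fin.last k)) w) :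
    IsLTRPath G (k + 1) (Fin.snoc p w : Fin (k + 2) → Fin n) := by
  refine ⟨Fin.strictMono_iff_lt_succ.2 fun i => ?_, fun i => ?_⟩
  · induction i using Fin.lastCases with
    | last => simpa only [Fin.succ_last, Fin.snoc_last, Fin.snoc_castSucc] using hlt
    | cast i =>
      simpa only [Fin.succ_castSucc, Fin.snoc_castSucc] using hp.1 i.castSucc_lt_succ
  · induction i using Fin.lastCases with
    | last => simpa only [Fin.succ_last, Fin.snoc_last, Fin.snoc_castSucc] using hadj
    | cast i => simpa only [Fin.succ_castSucc, Fin.snoc_castSucc] using hp.2 i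

theorem IsLTRPath.le_ltrDepth {k : ℕ} {p : Fin (k + 1) → Fin n} (hp : IsLTRPath G k p) :
    k ≤ ltrDepth G (p (Fin.last k)) :=
  le_csSup ⟨n, fun _ ⟨_, hp', _⟩ => hp'.length_lt.le⟩ ⟨p, hp, rfl⟩

theorem exists_isLTRPath_ltrDepth (G : SimpleGraph (Fin n)) (v : Fin n) :
    ∃ p : Fin (ltrDepth G v + 1) → Fin n, IsLTRPath G (ltrDepth G v) p ∧ p (Fin.last _) = v := by
  let lengths : Set ℕ := {k | ∃ p : Fin (k + 1) → Fin n, IsLTRPath G k p ∧ p (Fin.last k) = v}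
  have hsingle : IsLTRPath G 0 fun _ => v :=
    ⟨Subsingleton.strictMono (α := Fin 1) _, fun i => i.elim0⟩
  have hne : lengths.Nonempty := ⟨0, _, hsingle, rfl⟩
  have hbdd : BddAbove lengths := ⟨n, fun _ ⟨_, hp, _⟩ => hp.length_lt.le⟩
  exact Nat.sSup_mem hne hbdd

theorem ltrDepth_lt_of_adj {v w : Fin n} (hvw : v < w) (hadj : G.Adj v w) :
    ltrDepth G v < ltrDepth G w := by
  obtain ⟨p, hp, hpv⟩ := exists_isLTRPath_ltrDepth G v
  simpa only [Fin.snoc_last] using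
    Nat.lt_of_succ_le (hp.snoc (hpv.trans_lt hvw) (hpv.symm ▸ hadj)).le_ltrDepth

theorem ltrDepth_le {D : ℕ}
    (hdepth : ∀ (k : ℕ) (p : Fin (k + 1) → Fin n), IsLTRPath G k p → k ≤ D) (v : Fin n) :
    ltrDepth G v ≤ D :=
  let ⟨p, hp, _⟩ := exists_isLTRPath_ltrDepth G v
  hdepth _ p hp

/-- The proper coloring of a graph on `Fin n` of depth at most `D` by the depths of its vertices. -/
noncomputable def ltrDepthColoring {D : ℕ}
    (hdepth : ∀ (k : ℕ) (p : Fin (k + 1) → Fin n), IsLTRPath G k p → k ≤ D) :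
    G.Coloring (Fin (D + 1)) :=
  SimpleGraph.Coloring.mk
    (fun v => ⟨ltrDepth G v, Nat.lt_succ_of_le (ltrDepth_le hdepth v)⟩)
    fun {v w} hadj heq => by
      have hdepth_eq : ltrDepth G v = ltrDepth G w := Fin.mk.inj heq
      rcases hadj.ne.lt_or_gt with hlt | hgt
      · exact (ltrDepth_lt_of_adj hlt hadj).ne hdepth_eq
      · exact (ltrDepth_lt_of_adj hgt hadj.symm).ne' hdepth_eq

theorem encard_ltrDepthColoring_lt_le {d D : ℕ}
    (hdeg : ∀ i : Fin n, {j : Fin n | j < i ∧ G.Adj j i}.ncard ≤ d)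
    (hdepth : ∀ (k : ℕ) (p : Fin (k + 1) → Fin n), IsLTRPath G k p → k ≤ D) (v : Fin n) :
    {w | G.Adj v w ∧ ltrDepthColoring hdepth w < ltrDepthColoring hdepth v}.encard ≤ d := by
  refine (Set.encard_le_encard ?_).trans
    (Set.encard_le_coe_iff_finite_ncard_le.2 ⟨Set.toFinite _, hdeg v⟩)
  rintro w ⟨hadj, hlt : ltrDepth G w < ltrDepth G v⟩
  refine ⟨lt_of_not_ge fun hvw => ?_, hadj.symm⟩
  exact hlt.not_gt (ltrDepth_lt_of_adj (hvw.lt_of_ne hadj.ne) hadj)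

end Depth

theorem hatGuessing_degenerate_upper_general {V : Type*} {G : SimpleGraph V} {d k q : ℕ}
    (hd : 2 ≤ d) (C : G.Coloring (Fin k))
    (hdeg : ∀ v, {w | G.Adj v w ∧ C w < C v}.encard ≤ d) (hq : 2 ^ d ^ k - 1 ≤ q) :
    ¬ HatWinning G q ∧ hatGuessingNumber G < q := by
  have hpos : 0 < 2 ^ d ^ k - 1 := Nat.sub_pos_of_lt (Nat.one_lt_two_pow (by positivity))
  exact ⟨not_hatWinning_of_coloring hd C hdeg hq, hatGuessingNumber_lt (hpos.trans_le hq)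
    fun r hr => not_hatWinning_of_coloring hd C hdeg (hq.trans hr)⟩

/-- Theorem 2 (He–Li): if `d ≥ 2`, `D ≥ 1` and `G` has a `d`-degenerate vertex
ordering of depth `D` (every vertex has at most `d` earlier neighbors, and the
longest left-to-right path has exactly `D` edges), then `HG(G) < 2^(d^(D+1))`;
equivalently the players have no winning strategy with `2^(d^(D+1))` colors. -/
theorem hatGuessing_degenerate_upper (d D n : ℕ) (hd : 2 ≤ d) (hD : 1 ≤ D)
    (G : SimpleGraph (Fin n))
    (hdeg : ∀ i : Fin n, {j : Fin n | j < i ∧ G.Adj j i}.ncard ≤ d)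
    (hdepth : ∀ (k : ℕ) (p : Fin (k + 1) → Fin n), IsLTRPath G k p → k ≤ D)
    (hex : ∃ p : Fin (D + 1) → Fin n, IsLTRPath G D p) :
    ¬ HatWinning G (2 ^ d ^ (D + 1)) ∧ hatGuessingNumber G < 2 ^ d ^ (D + 1) :=
  hatGuessing_degenerate_upper_general hd (ltrDepthColoring hdepth)
    (encard_ltrDepthColoring_lt_le hdeg hdepth) (Nat.sub_le _ _)
end

section
/- Let G be a finite simple graph with vertices ordered v_1,…,v_n, and for each i let A(v_i) = N(v_i) ∩ {v_1,…,v_{i−1}} be the set of neighbors of v_i preceding it. Define t_1,…,t_n recursively by t_i = 1 + ∏_{v_j ∈ A(v_i)} t_j (where the empty product equals 1). Then in the hat guessing game on G with q = max{t_1,…,t_n} colors, the players have no winning strategy; that is, for every assignment to each vertex v of a function g_v from q-colorings of its neighborhood to {1,…,q}, there exists a q-coloring χ of the vertices such that every vertex v satisfies g_v(χ restricted to N(v)) ≠ χ(v). Consequently HG(G) < max{t_1,…,t_n}. -/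
/-!
Colors are chosen from the last vertex down, each avoiding every guess its vertex could still make.
Once the colors after `v` are fixed, the guess of `v` varies only with the colors of its earlier
neighbors. If these are restricted to palettes, there are at most as many guesses as the product of
the palette sizes, so a strictly larger palette at `v` has a color that is never guessed.
-/

section PaletteColoring

variable {V : Type*} {α : V → Type*}

theorem exists_finset_card_le_prod_of_dependsOn {β : Type*} {g : (∀ v, α v) → β} {A : Finset V}
    {U : Set V} (hg : DependsOn g (A ∪ U)) (S : ∀ v, Finset (α v)) (χ : ∀ v, α v) :
    ∃ B : Finset β, B.card ≤ ∏ w ∈ A, (S w).card ∧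
      ∀ ψ : ∀ v, α v, (∀ w ∈ A, ψ w ∈ S w) → (∀ w ∈ U, ψ w = χ w) → g ψ ∈ B := by
  classical
  let extend (f : ∀ w ∈ A, α w) : ∀ w, α w := fun w => if h : w ∈ A then f w h else χ w
  refine ⟨(A.pi S).image fun f => g (extend f),
    Finset.card_image_le.trans_eq (Finset.card_pi A S), fun ψ hψS hψχ => ?_⟩
  refine Finset.mem_image.mpr ⟨fun w _ => ψ w, Finset.mem_pi.mpr hψS, hg fun w hw => ?_⟩
  by_cases hwA : w ∈ A
  · exact dif_pos hwA
  · exact (dif_neg hwA).trans (hψχ w (hw.resolve_left hwA)).symm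

theorem exists_forall_rel_of_wellFounded {r : V → V → Prop} (hr : WellFounded r)
    {P : ∀ v, (∀ w, r w v → α w) → α v → Prop} (hP : ∀ v p, ∃ c, P v p c) :
    ∃ χ : ∀ v, α v, ∀ v, P v (fun w _ => χ w) (χ v) := by
  choose f hf using hP
  refine ⟨hr.fix f, fun v => ?_⟩
  rw [hr.fix_eq]
  exact hf v _

theorem exists_coloring_forall_guess_ne [Preorder V] [WellFoundedGT V]
    {S : ∀ v, Finset (α v)} {A : V → Finset V} (hS : ∀ v, ∏ w ∈ A v, (S w).card < (S v).card)
    {g : ∀ v, (∀ w, α w) → α v} (hg : ∀ v, DependsOn (g v) (A v ∪ Set.Ioi v)) :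
    ∃ χ : ∀ v, α v, (∀ v, χ v ∈ S v) ∧ ∀ v, g v χ ≠ χ v := by
  classical
  have hne : ∀ v, (S v).Nonempty := fun v => Finset.card_pos.mp (Nat.zero_lt_of_lt (hS v))
  choose d _ using hne
  have exists_unguessed : ∀ v (p : ∀ w, v < w → α w), ∃ c, c ∈ S v ∧ ∀ ψ : ∀ w, α w,
      (∀ w, ψ w ∈ S w) → (∀ w (h : v < w), ψ w = p w h) → g v ψ ≠ c := by
    intro v p
    obtain ⟨guesses, hcard, hguesses⟩ := exists_finset_card_le_prod_of_dependsOn (hg v) S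
      fun w => if h : v < w then p w h else d w
    obtain ⟨c, hcS, hc⟩ := Finset.exists_mem_notMem_of_card_lt_card (hcard.trans_lt (hS v))
    refine ⟨c, hcS, fun ψ hψS hψp => ?_⟩
    have hmem : g v ψ ∈ guesses :=
      hguesses ψ (fun w _ => hψS w) fun w hw => (hψp w hw).trans (dif_pos hw).symm
    exact ne_of_mem_of_not_mem hmem hc
  obtain ⟨χ, hχ⟩ := exists_forall_rel_of_wellFounded wellFounded_gt exists_unguessed
  exact ⟨χ, fun v => (hχ v).1, fun v => (hχ v).2 χ (fun w => (hχ w).1) fun _ _ => rfl⟩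

end PaletteColoring

section HatGuessing

variable {V : Type*} {G : SimpleGraph V} {q : ℕ}

theorem hatGuessingNumber_lt_of_forall_not_hatWinning (hq : 0 < q)
    (h : ∀ r, q ≤ r → ¬ HatWinning G r) : hatGuessingNumber G < q := by
  have hle : hatGuessingNumber G ≤ q - 1 := csSup_le' fun r hr =>
    Nat.le_sub_one_of_lt (not_le.mp fun hqr => h r hqr hr)
  exact hle.trans_lt (Nat.sub_one_lt hq.ne')

variable [Preorder V] [WellFoundedGT V] {A : V → Finset V} {t : V → ℕ}

theorem not_hatWinning_of_prod_lt_s4 (hA : ∀ v w, G.Adj v w → w ∈ A v ∨ v < w)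
    (ht : ∀ v, ∏ w ∈ A v, t w < t v) (hq : ∀ v, t v ≤ q) : ¬ HatWinning G q := by
  rintro ⟨g, hg⟩
  let palette (v : V) : Finset (Fin q) := {c | c.val < t v}
  have hcard : ∀ v, (palette v).card = t v := fun v => by
    rw [Fin.card_filter_val_lt, min_eq_right (hq v)]
  have hdep : ∀ v, DependsOn (fun χ : V → Fin q => g v fun w => χ w) (A v ∪ Set.Ioi v) :=
    fun v χ ψ h => congrArg (g v) (funext fun w => h w (hA v w w.2))
  obtain ⟨χ, -, hχ⟩ := exists_coloring_forall_guess_ne (S := palette)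
    (fun v => by simpa only [hcard] using ht v) hdep
  obtain ⟨v, hv⟩ := hg χ
  exact hχ v hv

theorem hatGuessing_lt_max_t_general [Nonempty V] (hA : ∀ v w, G.Adj v w → w ∈ A v ∨ v < w)
    (ht : ∀ v, ∏ w ∈ A v, t w < t v) (hq : ∀ v, t v ≤ q) :
    ¬ HatWinning G q ∧ hatGuessingNumber G < q := by
  have hnot : ∀ r, q ≤ r → ¬ HatWinning G r := fun r hr =>
    not_hatWinning_of_prod_lt_s4 hA ht fun v => (hq v).trans hr
  obtain ⟨v⟩ := ‹Nonempty V›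
  have hpos : 0 < q := Nat.zero_lt_of_lt ((ht v).trans_le (hq v))
  exact ⟨hnot q le_rfl, hatGuessingNumber_lt_of_forall_not_hatWinning hpos hnot⟩

end HatGuessing

/-- Lemma 4 (He–Li): if `t_i = 1 + ∏_{j ∈ A(v_i)} t_j` where `A(v_i)` is the set of
earlier neighbors of `v_i`, then the players have no winning strategy with
`q = max t_i` colors; consequently `HG(G) < max t_i`. -/
theorem hatGuessing_lt_max_t (n : ℕ) (hn : 1 ≤ n) (G : SimpleGraph (Fin n))
    [DecidableRel G.Adj] (t : Fin n → ℕ)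
    (ht : ∀ i : Fin n,
      t i = 1 + ∏ j ∈ Finset.univ.filter (fun j => j < i ∧ G.Adj j i), t j)
    (q : ℕ) (hq : q = Finset.univ.sup t) :
    ¬ HatWinning G q ∧ hatGuessingNumber G < q := by
  have : Nonempty (Fin n) := Fin.pos_iff_nonempty.mp hn
  exact hatGuessing_lt_max_t_general (A := fun i => {j | j < i ∧ G.Adj j i})
    (fun v w h => by simpa [h.symm] using h.ne'.lt_or_gt)
    (fun v => (lt_one_add _).trans_eq (ht v).symm)
    fun v => hq ▸ Finset.le_sup (Finset.mem_univ v)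
end

section
/- Let d ≥ 2 be an integer. For all sufficiently large n (in terms of d), the hat guessing number of the book graph B_{d,n} satisfies (d+1)! ≤ HG(B_{d,n}) ≤ d^{d−2}(d^2 + d − 1) + 1. -/
/-!
For many pages, the pages can use every guessing function of the spine coloring, so the spine
colorings on which all pages guess wrong form an arbitrary set of fewer than `q` points. Hence the
players win on `B_{d,n}` if and only if the spine alone can succeed on every such set.

Lower bound: the spine succeeds on any set of fewer than `(d + 1)!` colorings. If fewer than `d!` of
them share a given color at some vertex, that slice is left to the other vertices by induction on
`d`; otherwise at most `d` colors occur at each vertex and the modular strategy for the complete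
graph wins.
Upper bound: each spine vertex guesses right at most once on every line in its direction, and the
box with side lengths `d + 1, d, …, d` has more points than axis-parallel lines.
-/

open Finset

/-- The players in `I` can succeed on the set `S` of colorings: there are guesses, the one of player
`i` depending only on the colors of the others, such that on each coloring in `S` some player in
`I` guesses correctly. The set of points at which player `i` is right meets each line in direction
`i` at most once, so this is coverability, with parts indexed by `I`, in terms of guesses. -/
def GuessableBy {ι : Type*} {α : ι → Type*} (I : Finset ι) (S : Set (∀ i, α i)) : Prop :=
  ∃ g : ∀ i, (∀ j : {j // j ≠ i}, α j) → α i, ∀ x ∈ S, ∃ i ∈ I, g i (fun j => x j) = x i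

section Guessable

variable {ι : Type*} {α : ι → Type*} {I : Finset ι} {S T : Set (∀ i, α i)}

theorem GuessableBy.mono (h : GuessableBy I T) (hST : S ⊆ T) : GuessableBy I S :=
  h.imp fun _ hg x hx => hg x (hST hx)

theorem GuessableBy.of_slice [DecidableEq ι] (i : ι) (c : α i)
    (h_slice : GuessableBy (I.erase i) {x ∈ S | x i = c})
    (h_rest : GuessableBy I {x ∈ S | x i ≠ c}) : GuessableBy I S := by
  classical
  obtain ⟨g, hg⟩ := h_slice
  obtain ⟨h, hh⟩ := h_rest
  -- Every player except `i` sees whether the coloring lies in the slice.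
  refine ⟨fun j u => if ∃ hij : i ≠ j, u ⟨i, hij⟩ = c then g j u else h j u, fun x hx => ?_⟩
  by_cases hxc : x i = c
  · obtain ⟨j, hj, hgj⟩ := hg x ⟨hx, hxc⟩
    exact ⟨j, mem_of_mem_erase hj, by simp [(ne_of_mem_erase hj).symm, hxc, hgj]⟩
  · obtain ⟨j, hj, hhj⟩ := hh x ⟨hx, hxc⟩
    exact ⟨j, hj, by simp [hxc, hhj]⟩

/-- The players aim at the `#I` different residues of the sum of all labels modulo `#I`. -/
theorem guessableBy_pi_of_card_le [∀ i, Nonempty (α i)] (hI : I.Nonempty)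
    (B : ∀ i, Finset (α i)) (hB : ∀ i ∈ I, #(B i) ≤ #I) :
    GuessableBy I (Set.pi I fun i => (B i : Set (α i))) := by
  classical
  have : NeZero #I := ⟨hI.card_pos.ne'⟩
  have hlabel : ∀ i ∈ I, ∃ e : α i → ZMod #I, Set.InjOn e (B i) := fun i hi => by
    obtain ⟨e, -, he⟩ := (B i).finite_toSet.exists_injOn_of_encard_le
      (t := (Set.univ : Set (ZMod #I))) (by simpa [Set.encard_univ] using hB i hi)
    exact ⟨e, he⟩
  choose! e he using hlabel
  obtain ⟨σ, hσ⟩ : ∃ σ : ι → ZMod #I, ∀ r, ∃ i ∈ I, σ i = r := by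
    let φ : I ≃ ZMod #I := Fintype.equivOfCardEq (by simp)
    refine ⟨fun i => if hi : i ∈ I then φ ⟨i, hi⟩ else 0, fun r => ?_⟩
    exact ⟨φ.symm r, (φ.symm r).2, by simp⟩
  refine ⟨fun i u => Function.invFunOn (e i) (B i)
    (σ i - ∑ j ∈ I.subtype (· ≠ i), e j (u j)), fun x hx => ?_⟩
  obtain ⟨i, hi, hsum⟩ := hσ (∑ j ∈ I, e j (x j))
  have hown : σ i - ∑ j ∈ I.subtype (· ≠ i), e j (x j) = e i (x i) := by
    rw [sum_subtype_eq_sum_filter (fun j => e j (x j)), filter_ne', hsum, sub_eq_iff_eq_add,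
      add_sum_erase I (fun j => e j (x j)) hi]
  refine ⟨i, hi, ?_⟩
  simp only [hown]
  exact (he i hi).leftInvOn_invFunOn (hx i hi)

theorem guessableBy_of_card_lt_factorial [∀ i, Nonempty (α i)] (I : Finset ι)
    (S : Finset (∀ i, α i)) (hS : #S < (#I + 1).factorial) :
    GuessableBy I (S : Set (∀ i, α i)) := by
  classical
  induction I using Finset.strongInduction generalizing S with
  | H I ihI =>
  induction S using Finset.strongInduction with
  | H S ihS =>
  rcases I.eq_empty_or_nonempty with rfl | hI
  · obtain rfl : S = ∅ := by simpa using hS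
    exact ⟨fun _ _ => Classical.arbitrary _, by simp⟩
  by_cases hsmall : ∃ i ∈ I, ∃ x ∈ S, #{y ∈ S | y i = x i} < (#I).factorial
  · obtain ⟨i, hi, x, hx, hlt⟩ := hsmall
    have hrest : {y ∈ S | y i ≠ x i} ⊂ S := filter_ssubset.2 ⟨x, hx, by simp⟩
    refine .of_slice i (x i) ?_ ?_
    · simpa using ihI _ (erase_ssubset hi) {y ∈ S | y i = x i} (by rwa [card_erase_add_one hi])
    · simpa using ihS _ hrest ((card_lt_card hrest).trans hS)
  · push Not at hsmall
    refine (guessableBy_pi_of_card_le hI (fun i => S.image (· i)) fun i hi => ?_).mono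
      fun x hx i _ => mem_image_of_mem (· i) hx
    have hmul : (#I).factorial * #(S.image (· i)) ≤ #S :=
      mul_card_image_le_card_of_maps_to (fun x hx => mem_image_of_mem _ hx) _ <|
        forall_mem_image.2 (hsmall i hi)
    rw [Nat.factorial_succ, mul_comm] at hS
    exact Nat.lt_succ_iff.1 (lt_of_mul_lt_mul_left (hmul.trans_lt hS) (Nat.zero_le _))

theorem card_le_prod_erase_of_forall_guess_eq [Fintype ι] [DecidableEq ι] (i : ι)
    (g : (∀ j : {j // j ≠ i}, α j) → α i) (B : ∀ i, Finset (α i)) {S : Finset (∀ i, α i)}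
    (hSB : S ⊆ Fintype.piFinset B) (hg : ∀ x ∈ S, g (fun j => x j) = x i) :
    #S ≤ ∏ j ∈ univ.erase i, #(B j) := by
  have hcard : #(Fintype.piFinset fun j : {j // j ≠ i} => B j) = ∏ j ∈ univ.erase i, #(B j) := by
    rw [Fintype.card_piFinset]
    exact (prod_subtype _ (by simp) fun j => #(B j)).symm
  rw [← hcard]
  refine card_le_card_of_injOn (fun x j => x j) (fun x hx => ?_) fun x hx y hy hxy => ?_
  · exact Fintype.mem_piFinset.2 fun j => Fintype.mem_piFinset.1 (hSB hx) j
  · funext j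
    by_cases hj : j = i
    · subst hj
      exact (hg x hx).symm.trans ((congrArg g hxy).trans (hg y hy))
    · exact congrFun hxy ⟨j, hj⟩

theorem GuessableBy.card_le_sum_prod_erase [Fintype ι] [DecidableEq ι] {S : Finset (∀ i, α i)}
    (h : GuessableBy I (S : Set (∀ i, α i))) (B : ∀ i, Finset (α i))
    (hSB : S ⊆ Fintype.piFinset B) : #S ≤ ∑ i ∈ I, ∏ j ∈ univ.erase i, #(B j) := by
  classical
  obtain ⟨g, hg⟩ := h
  calc #S ≤ #(I.biUnion fun i => {x ∈ S | g i (fun j => x j) = x i}) :=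
        card_le_card fun x hx => by simpa [mem_coe.1 hx] using hg x hx
    _ ≤ ∑ i ∈ I, #{x ∈ S | g i (fun j => x j) = x i} := card_biUnion_le
    _ ≤ ∑ i ∈ I, ∏ j ∈ univ.erase i, #(B j) := sum_le_sum fun i _ =>
        card_le_prod_erase_of_forall_guess_eq i (g i) B ((filter_subset _ _).trans hSB)
          fun x hx => (mem_filter.1 hx).2

end Guessable

/-- Otherwise some function maps `S` onto `α`, and the index of this function in the family `p`
leaves no possible value of `c`. -/
theorem card_lt_of_surjective_of_forall_ne {κ X α : Type*} [Fintype α] [Nonempty α] {p : κ → X → α}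
    (hp : Function.Surjective p) (c : κ → α) {S : Finset X} (hS : ∀ x ∈ S, ∀ k, p k x ≠ c k) :
    #S < Fintype.card α := by
  by_contra! hle
  obtain ⟨φ⟩ : Nonempty (α ↪ S) := Function.Embedding.nonempty_of_card_le (by simpa using hle)
  let φX : α ↪ X := φ.trans (Function.Embedding.subtype _)
  obtain ⟨k, hk⟩ := hp (Function.invFun φX)
  refine hS (φX (c k)) (φ (c k)).2 k ?_
  rw [hk]
  exact Function.leftInverse_invFun φX.injective (c k)

section Book

variable {d n q : ℕ}

theorem bookGraph_adj_inl_inl {i j : Fin d} :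
    (bookGraph d n).Adj (.inl i) (.inl j) ↔ i ≠ j := by
  simp [bookGraph]

theorem bookGraph_adj_inl_inr (i : Fin d) (k : Fin n) :
    (bookGraph d n).Adj (.inl i) (.inr k) := by
  simp [bookGraph]

theorem not_bookGraph_adj_inr_inr (k l : Fin n) :
    ¬ (bookGraph d n).Adj (.inr k) (.inr l) := by
  simp [bookGraph]

theorem hatWinning_bookGraph_of_guessableBy (hq : 0 < q) (hn : q ^ q ^ d ≤ n)
    (h : ∀ S : Finset (Fin d → Fin q), #S < q →
      GuessableBy univ (S : Set (Fin d → Fin q))) :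
    HatWinning (bookGraph d n) q := by
  classical
  have : NeZero q := ⟨hq.ne'⟩
  obtain ⟨φ⟩ : Nonempty (((Fin d → Fin q) → Fin q) ↪ Fin n) :=
    Function.Embedding.nonempty_of_card_le (by simpa using hn)
  obtain ⟨p, hp⟩ : ∃ p : Fin n → (Fin d → Fin q) → Fin q, Function.Surjective p :=
    ⟨_, Function.invFun_surjective φ.injective⟩
  let missed (c : Fin n → Fin q) : Finset (Fin d → Fin q) := {x | ∀ k, p k x ≠ c k}
  have hmissed : ∀ c, #(missed c) < q := fun c => by
    simpa using card_lt_of_surjective_of_forall_ne hp c fun x hx => (mem_filter.1 hx).2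
  choose g hg using fun c => h (missed c) (hmissed c)
  refine ⟨fun
    | .inl i => fun χ => g (fun k => χ ⟨.inr k, bookGraph_adj_inl_inr i k⟩) i
        fun j => χ ⟨.inl j, bookGraph_adj_inl_inl.2 j.2.symm⟩
    | .inr k => fun χ => p k fun i => χ ⟨.inl i, (bookGraph_adj_inl_inr i k).symm⟩, fun χ => ?_⟩
  by_cases hpage : ∃ k, p k (fun i => χ (.inl i)) = χ (.inr k)
  · obtain ⟨k, hk⟩ := hpage
    exact ⟨.inr k, hk⟩
  · push Not at hpage
    obtain ⟨i, -, hi⟩ := hg (fun k => χ (.inr k)) (fun i => χ (.inl i)) <| by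
      simpa [missed] using hpage
    exact ⟨.inl i, hi⟩

theorem HatWinning.guessableBy_of_card_lt (h : HatWinning (bookGraph d n) q)
    (S : Finset (Fin d → Fin q)) (hS : #S < q) :
    GuessableBy univ (S : Set (Fin d → Fin q)) := by
  classical
  obtain ⟨g, hg⟩ := h
  let pageGuess (k : Fin n) (x : Fin d → Fin q) : Fin q :=
    g (.inr k) fun
      | ⟨.inl i, _⟩ => x i
      | ⟨.inr l, hl⟩ => absurd hl (not_bookGraph_adj_inr_inr k l)
  have havoid : ∀ k, ∃ a, a ∉ S.image (pageGuess k) := fun k => by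
    have hlt : #(S.image (pageGuess k)) < #(univ : Finset (Fin q)) :=
      card_image_le.trans_lt (by simpa using hS)
    exact (exists_mem_notMem_of_card_lt_card hlt).imp fun _ => And.right
  choose c hc using havoid
  refine ⟨fun i u => g (.inl i) fun
    | ⟨.inl j, hj⟩ => u ⟨j, (bookGraph_adj_inl_inl.1 hj).symm⟩
    | ⟨.inr k, _⟩ => c k, fun x hx => ?_⟩
  obtain ⟨i | k, hv⟩ := hg (Sum.elim x c)
  · refine ⟨i, mem_univ i, Eq.trans (congrArg (g (.inl i)) (funext ?_)) hv⟩
    rintro ⟨j | k, _⟩ <;> rfl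
  · refine absurd (mem_image.2 ⟨x, hx, Eq.trans (congrArg (g (.inr k)) (funext ?_)) hv⟩) (hc k)
    rintro ⟨i | l, hl⟩
    · rfl
    · exact absurd hl (not_bookGraph_adj_inr_inr k l)

theorem HatWinning.le_sum_prod_erase_add_one (h : HatWinning (bookGraph d n) q) (b : Fin d → ℕ)
    (hbq : ∀ i, b i ≤ q) (hb : ∑ i, ∏ j ∈ univ.erase i, b j < ∏ i, b i) :
    q ≤ (∑ i, ∏ j ∈ univ.erase i, b j) + 1 := by
  by_contra! hlt
  have hside : ∀ i, ∃ B : Finset (Fin q), #B = b i := fun i =>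
    (exists_subset_card_eq (s := univ) (by simpa using hbq i)).imp fun _ => And.right
  choose B hB using hside
  obtain ⟨S, hSB, hS⟩ : ∃ S ⊆ Fintype.piFinset B, #S = (∑ i, ∏ j ∈ univ.erase i, b j) + 1 :=
    exists_subset_card_eq (by simpa [hB] using Nat.succ_le_of_lt hb)
  have hle := (h.guessableBy_of_card_lt S (hS ▸ hlt)).card_le_sum_prod_erase B hSB
  simp only [hB] at hle
  omega

end Book

theorem sum_prod_erase_update_const {ι : Type*} [Fintype ι] [DecidableEq ι] (i₀ : ι) (a m : ℕ) :
    ∑ i, ∏ j ∈ univ.erase i, Function.update (fun _ => m) i₀ a j =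
      m ^ (Fintype.card ι - 1) + (Fintype.card ι - 1) * (a * m ^ (Fintype.card ι - 2)) := by
  have hother : ∀ i ∈ univ.erase i₀,
      ∏ j ∈ univ.erase i, Function.update (fun _ => m) i₀ a j = a * m ^ (Fintype.card ι - 2) :=
    fun i hi => by
      have hi₀ : i₀ ∈ univ.erase i := mem_erase.2 ⟨(ne_of_mem_erase hi).symm, mem_univ _⟩
      rw [prod_update_of_mem hi₀, prod_const, sdiff_singleton_eq_erase, card_erase_of_mem hi₀,
        card_erase_of_mem (mem_univ i), card_univ, Nat.sub_sub]
  rw [← add_sum_erase _ _ (mem_univ i₀), prod_update_of_notMem (notMem_erase _ _),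
    sum_congr rfl hother]
  simp

theorem HatWinning.le_of_bookGraph {d n q : ℕ} (hd : 2 ≤ d) (h : HatWinning (bookGraph d n) q) :
    q ≤ d ^ (d - 2) * (d ^ 2 + d - 1) + 1 := by
  let i₀ : Fin d := ⟨0, by omega⟩
  let b : Fin d → ℕ := Function.update (fun _ => d) i₀ (d + 1)
  have hpow : 0 < d ^ (d - 2) := by positivity
  have hlines : ∑ i, ∏ j ∈ univ.erase i, b j = d ^ (d - 2) * (d ^ 2 + d - 1) := by
    rw [sum_prod_erase_update_const, Fintype.card_fin]
    obtain ⟨k, rfl⟩ := Nat.exists_eq_add_of_le' hd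
    rw [show k + 2 - 1 = k + 1 by rfl, show (k + 2) ^ 2 + (k + 2) - 1 = (k + 2) ^ 2 + k + 1 by rfl,
      Nat.add_sub_cancel]
    ring
  have hpoints : ∏ i, b i = d ^ (d - 2) * (d ^ 2 + d) := by
    rw [prod_update_of_mem (mem_univ i₀), prod_const, card_univ_sdiff, Fintype.card_fin]
    obtain ⟨k, rfl⟩ := Nat.exists_eq_add_of_le' hd
    simp only [card_singleton, Nat.add_sub_cancel, show k + 2 - 1 = k + 1 by rfl]
    ring
  by_contra! hlt
  have hbq : ∀ i, b i ≤ q := fun i => by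
    have hbi : b i ≤ d + 1 := by
      simp only [b, Function.update_apply]
      split_ifs <;> omega
    have hL : d ^ 2 + d - 1 ≤ d ^ (d - 2) * (d ^ 2 + d - 1) := Nat.le_mul_of_pos_left _ hpow
    have hd2 : 0 < d ^ 2 := by positivity
    omega
  have hb : ∑ i, ∏ j ∈ univ.erase i, b j < ∏ i, b i := by
    rw [hlines, hpoints]
    exact Nat.mul_lt_mul_of_pos_left (Nat.sub_one_lt (by positivity)) hpow
  exact (hlines ▸ h.le_sum_prod_erase_add_one b hbq hb).not_gt hlt

theorem hatWinning_bookGraph_factorial {d n : ℕ}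
    (hn : (d + 1).factorial ^ (d + 1).factorial ^ d ≤ n) :
    HatWinning (bookGraph d n) (d + 1).factorial :=
  have : NeZero (d + 1).factorial := ⟨Nat.factorial_ne_zero _⟩
  hatWinning_bookGraph_of_guessableBy (Nat.factorial_pos _) hn fun S hS =>
    guessableBy_of_card_lt_factorial univ S (by simpa using hS)

/-- Theorem 3 (He–Li): for `d ≥ 2` and all sufficiently large `n`,
`(d+1)! ≤ HG(B_{d,n}) ≤ d^(d-2)(d^2+d-1) + 1`. -/
theorem hatGuessing_book (d : ℕ) (hd : 2 ≤ d) :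
    ∃ n₀ : ℕ, ∀ n : ℕ, n₀ ≤ n →
      (d + 1).factorial ≤ hatGuessingNumber (bookGraph d n) ∧
      hatGuessingNumber (bookGraph d n) ≤ d ^ (d - 2) * (d ^ 2 + d - 1) + 1 := by
  refine ⟨(d + 1).factorial ^ (d + 1).factorial ^ d, fun n hn => ⟨?_, ?_⟩⟩
  · exact le_csSup ⟨_, fun _ => HatWinning.le_of_bookGraph hd⟩ (hatWinning_bookGraph_factorial hn)
  · exact csSup_le' fun _ => HatWinning.le_of_bookGraph hd
end

section
/- For every integer d ≥ 2, every subset S ⊆ {0,1,…,d−1}^{d−1} × {0,1,…,d} ⊆ ℕ^d of size d^{d−2}(d^2 + d − 1) + 1 is not coverable. -/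
/- Covering a set amounts to choosing, injectively, an axis-parallel line through each of its
points. Hence a coverable subset of a nonempty box has at most as many points as there are
axis-parallel lines meeting the box. For sides `d, …, d, d + 1` there are `d ^ (d - 1)` lines in the
last direction and `(d + 1) * d ^ (d - 2)` in each of the other `d - 1` directions. -/

open Finset

section AxisLine

variable {ι α : Type*} [Fintype ι] [DecidableEq ι]

/-- The line through `x` parallel to the `i`-th axis, encoded by its direction `i` together with the
coordinates other than the `i`-th, which are constant along it. -/
def axisLine (i : ι) (x : ι → α) : Σ i : ι, (({i}ᶜ : Finset ι) → α) :=
  ⟨i, Finset.restrict {i}ᶜ x⟩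

/-- The axis-parallel lines that meet the box `∏ i, s i`, in the encoding of `axisLine`: a line in
direction `i` is listed when its other coordinates `x j` lie in `s j`. An empty side `s i` makes the
box empty, but lines in direction `i` may still be listed. -/
def boxAxisLines (s : ι → Finset α) : Finset (Σ i : ι, (({i}ᶜ : Finset ι) → α)) :=
  univ.sigma fun i ↦ Fintype.piFinset fun j : ({i}ᶜ : Finset ι) ↦ s j

theorem axisLine_eq_axisLine_iff {i i' : ι} {x y : ι → α} :
    axisLine i x = axisLine i' y ↔ i = i' ∧ ∀ j, j ≠ i → x j = y j := by
  constructor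
  · intro h
    obtain rfl : i = i' := congrArg Sigma.fst h
    simpa [axisLine, funext_iff] using h
  · rintro ⟨rfl, h⟩
    simpa [axisLine, funext_iff] using h

theorem axisLine_mem_boxAxisLines {s : ι → Finset α} {x : ι → α} (hx : ∀ j, x j ∈ s j) (i : ι) :
    axisLine i x ∈ boxAxisLines s := by
  simp [axisLine, boxAxisLines, hx]

theorem card_boxAxisLines (s : ι → Finset α) :
    #(boxAxisLines s) = ∑ i, ∏ j ∈ {i}ᶜ, #(s j) := by
  simp only [boxAxisLines, card_sigma, Fintype.card_piFinset]
  exact sum_congr rfl fun i _ ↦ prod_coe_sort {i}ᶜ fun j ↦ #(s j)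

end AxisLine

theorem coverable_iff_exists_injOn_axisLine {d : ℕ} {S : Set (Fin d → ℕ)} :
    Coverable S ↔ ∃ f : (Fin d → ℕ) → Fin d, Set.InjOn (fun x ↦ axisLine (f x) x) S := by
  refine exists_congr fun f ↦ forall₄_congr fun x _ y _ ↦ ?_
  rw [axisLine_eq_axisLine_iff]
  grind

theorem prod_compl_singleton_update_const {ι M : Type*} [Fintype ι] [DecidableEq ι] [CommMonoid M]
    {i k : ι} (hik : i ≠ k) (a b : M) :
    ∏ j ∈ {i}ᶜ, Function.update (fun _ ↦ a) k b j = b * a ^ (Fintype.card ι - 2) := by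
  have hk : k ∈ ({i}ᶜ : Finset ι) := by simpa using hik.symm
  rw [prod_update_of_mem hk, prod_const, card_sdiff_of_subset (singleton_subset_iff.2 hk),
    card_compl, card_singleton, card_singleton, Nat.sub_sub]

theorem sum_prod_compl_singleton_update_const {ι R : Type*} [Fintype ι] [DecidableEq ι]
    [CommSemiring R] (k : ι) (a b : R) :
    ∑ i, ∏ j ∈ {i}ᶜ, Function.update (fun _ ↦ a) k b j =
      a ^ (Fintype.card ι - 1) + (Fintype.card ι - 1 : ℕ) * (b * a ^ (Fintype.card ι - 2)) := by
  rw [Fintype.sum_eq_add_sum_compl k]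
  congr 1
  · rw [prod_update_of_notMem (by simp), prod_const, card_compl, card_singleton]
  · rw [sum_congr rfl fun i hi ↦ prod_compl_singleton_update_const (by simpa using hi) a b,
      sum_const, card_compl, card_singleton, nsmul_eq_mul]

theorem sum_prod_compl_singleton_update_const_succ {d : ℕ} (hd : 2 ≤ d) (k : Fin d) :
    ∑ i, ∏ j ∈ {i}ᶜ, Function.update (fun _ ↦ d) k (d + 1) j = d ^ (d - 2) * (d ^ 2 + d - 1) := by
  rw [sum_prod_compl_singleton_update_const, Fintype.card_fin, Nat.cast_id]
  obtain ⟨n, rfl⟩ := Nat.exists_eq_add_of_le' hd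
  calc
    (n + 2) ^ (n + 1) + (n + 1) * ((n + 3) * (n + 2) ^ n)
      = (n + 2) ^ n * ((n + 2) + (n + 1) * (n + 3)) := by ring
    _ = (n + 2) ^ n * ((n + 2) ^ 2 + (n + 2) - 1) := by
      congr 1
      exact Nat.eq_sub_of_add_eq (by ring)

theorem not_coverable_of_box_general {d : ℕ} {S : Set (Fin d → ℕ)} {s : Fin d → Finset ℕ}
    (hS : ∀ x ∈ S, ∀ i, x i ∈ s i) (hcard : ∑ i, ∏ j ∈ {i}ᶜ, #(s j) < S.ncard) :
    ¬ Coverable S := by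
  rw [coverable_iff_exists_injOn_axisLine]
  rintro ⟨f, hf⟩
  rw [← card_boxAxisLines, ← Set.ncard_coe_finset] at hcard
  exact hcard.not_ge <| Set.ncard_le_ncard_of_injOn _
    (fun x hx ↦ axisLine_mem_boxAxisLines (hS x hx) (f x)) hf

/-- Every subset of `{0,…,d-1}^(d-1) × {0,…,d} ⊆ ℕ^d` of size
`d^(d-2)(d^2+d-1) + 1` is not coverable. -/
theorem not_coverable_of_box (d : ℕ) (hd : 2 ≤ d) (S : Set (Fin d → ℕ))
    (hS : ∀ x ∈ S, (∀ i : Fin d, (i : ℕ) < d - 1 → x i < d) ∧ x ⟨d - 1, by omega⟩ ≤ d)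
    (hcard : S.ncard = d ^ (d - 2) * (d ^ 2 + d - 1) + 1) :
    ¬ Coverable S := by
  let last : Fin d := ⟨d - 1, by omega⟩
  refine not_coverable_of_box_general
    (s := fun i ↦ range (Function.update (fun _ ↦ d) last (d + 1) i)) (fun x hx ↦ ?_) ?_
  · obtain ⟨hinit, hlast⟩ := hS x hx
    simp only [mem_range]
    exact (Function.forall_update_iff _ fun i n ↦ x i < n).2 ⟨Nat.lt_succ_of_le hlast,
      fun i hi ↦ hinit i (Nat.lt_of_le_of_ne (Nat.le_sub_one_of_lt i.isLt) (Fin.val_ne_of_ne hi))⟩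
  · simp only [card_range]
    rw [sum_prod_compl_singleton_update_const_succ hd, hcard]
    exact Nat.lt_succ_self _
end

section
/- For every integer d ≥ 2, h(ℕ^d) ≥ (d+1)·h(ℕ^{d−1}) + d; that is, if every subset of ℕ^{d−1} of size h is coverable, then every subset of ℕ^d of size (d+1)h + d is coverable. -/
/-!
If every layer `{x ∈ S | x i = c}` that meets `S` has at least `h + 1` points, then, as
`|S| < (d + 1)(h + 1)`, every coordinate takes at most `d` values on `S`; so `S` lies in a grid of
side `d`, which is partitioned by the sum of the coordinates modulo `d`. Otherwise some nonempty
layer has at most `h` points. Its projection to `ℕ^(d-1)` is coverable, so the layer can be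
partitioned without using part `i`, and the rest of `S` is coverable by induction on `|S|`: no line
in a direction other than `i` meets both the layer and the rest.

That `h(ℕ^d)` is finite, so that the supremum defining it is not a junk value, comes from counting:
each line carries at most one point of the part of its direction, and the grid of side `d + 1` has
more points than axis-parallel lines.
-/

theorem coverable_iff_eqOn_compl {d : ℕ} {S : Set (Fin d → ℕ)} :
    Coverable S ↔ ∃ f : (Fin d → ℕ) → Fin d, ∀ i, ∀ x ∈ S, ∀ y ∈ S,
      f x = i → f y = i → Set.EqOn x y {i}ᶜ → x = y := by
  refine exists_congr fun f => ⟨fun hf i x hx y hy hxi hyi hxy => ?_,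
    fun hf x hx y hy hne hfxy => ?_⟩
  · by_contra hne
    obtain ⟨j, hj, hxyj⟩ := hf x hx y hy hne (hxi.trans hyi.symm)
    exact hxyj (hxy (hxi ▸ hj))
  · by_contra! hxy
    exact hne (hf (f x) x hx y hy rfl hfxy.symm hxy)

theorem removeNth_eq_removeNth_iff_eqOn_compl {n : ℕ} {α : Type*} (i : Fin (n + 1))
    {x y : Fin (n + 1) → α} :
    i.removeNth x = i.removeNth y ↔ Set.EqOn x y {i}ᶜ := by
  rw [← Fin.range_succAbove, Set.eqOn_range]
  rfl

namespace Coverable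

theorem mono {d : ℕ} {S T : Set (Fin d → ℕ)} (hT : Coverable T) (hST : S ⊆ T) :
    Coverable S := by
  obtain ⟨f, hf⟩ := hT
  exact ⟨f, fun x hx y hy => hf x (hST hx) y (hST hy)⟩

theorem of_layer {n : ℕ} {S : Set (Fin (n + 1) → ℕ)} (i : Fin (n + 1)) (c : ℕ)
    (hlayer : Coverable (i.removeNth '' {x ∈ S | x i = c}))
    (hrest : Coverable {x ∈ S | x i ≠ c}) : Coverable S := by
  obtain ⟨g, hg⟩ := coverable_iff_eqOn_compl.1 hlayer
  obtain ⟨f, hf⟩ := coverable_iff_eqOn_compl.1 hrest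
  -- Points of the layer `x i = c` never get colour `i`, and a line in another direction lies
  -- entirely inside or entirely outside the layer.
  let F : (Fin (n + 1) → ℕ) → Fin (n + 1) := fun x =>
    if x i = c then i.succAbove (g (i.removeNth x)) else f x
  have mem_layer {k x y} (hxk : F x = k) (hxy : Set.EqOn x y {k}ᶜ) (hxc : x i = c) : y i = c := by
    have hik : i ≠ k := by
      simp only [F, hxc, if_true] at hxk
      exact hxk ▸ Fin.ne_succAbove i _
    exact (hxy hik).symm.trans hxc
  refine coverable_iff_eqOn_compl.2 ⟨F, fun k x hx y hy hxk hyk hxy => ?_⟩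
  by_cases hxc : x i = c
  · have hyc : y i = c := mem_layer hxk hxy hxc
    simp only [F, hxc, hyc, if_true] at hxk hyk
    have hgxy : g (i.removeNth y) = g (i.removeNth x) :=
      Fin.succAbove_right_injective (hyk.trans hxk.symm)
    have hrem : i.removeNth x = i.removeNth y :=
      hg _ _ ⟨x, ⟨hx, hxc⟩, rfl⟩ _ ⟨y, ⟨hy, hyc⟩, rfl⟩ rfl hgxy fun j hj =>
        hxy (hxk ▸ Fin.succAbove_right_injective.ne hj)
    rw [← Fin.insertNth_self_removeNth i x, ← Fin.insertNth_self_removeNth i y, hrem, hxc, hyc]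
  · have hyc : y i ≠ c := mt (mem_layer hyk hxy.symm) hxc
    simp only [F, hxc, hyc, if_false] at hxk hyk
    exact hf k x ⟨hx, hxc⟩ y ⟨hy, hyc⟩ hxk hyk hxy

theorem of_encard_image_eval_le {d : ℕ} [NeZero d] {S : Set (Fin d → ℕ)}
    (hS : ∀ i, (Function.eval i '' S).encard ≤ d) : Coverable S := by
  have exists_label (i : Fin d) : ∃ e : ℕ → Fin d, Set.InjOn e (Function.eval i '' S) := by
    have hfin : (Function.eval i '' S).Finite :=
      Set.finite_of_encard_le_coe (hS i)
    obtain ⟨e, -, he⟩ := hfin.exists_injOn_of_encard_le (t := (Set.univ : Set (Fin d)))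
      (by simpa using hS i)
    exact ⟨e, he⟩
  choose e he using exists_label
  -- Along a line parallel to the `k`-th axis only the `k`-th summand varies, so this sum in `ℤ/d`
  -- is injective on the points of the line.
  refine coverable_iff_eqOn_compl.2 ⟨fun x => ∑ i, e i (x i), fun k x hx y hy hxk hyk hxy => ?_⟩
  have hdiff : e k (x k) - e k (y k) = 0 := calc
    e k (x k) - e k (y k) = ∑ i, (e i (x i) - e i (y i)) := by
      rw [Fintype.sum_eq_single k]
      exact fun i hi => by rw [hxy hi, sub_self]
    _ = ∑ i, e i (x i) - ∑ i, e i (y i) := Finset.sum_sub_distrib _ _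
    _ = 0 := sub_eq_zero.2 (hxk.trans hyk.symm)
  have hk : x k = y k :=
    he k (Set.mem_image_of_mem _ hx) (Set.mem_image_of_mem _ hy) (sub_eq_zero.1 hdiff)
  funext j
  obtain rfl | hj := eq_or_ne j k
  · exact hk
  · exact hxy hj

theorem card_le_sum_card_image_removeNth {n : ℕ} {S : Finset (Fin (n + 1) → ℕ)}
    (hS : Coverable (S : Set (Fin (n + 1) → ℕ))) :
    S.card ≤ ∑ i : Fin (n + 1), (S.image i.removeNth).card := by
  obtain ⟨f, hf⟩ := coverable_iff_eqOn_compl.1 hS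
  rw [Finset.card_eq_sum_card_fiberwise fun x _ => Finset.mem_univ (f x)]
  refine Finset.sum_le_sum fun i _ => Finset.card_le_card_of_injOn i.removeNth ?_ ?_
  · exact fun x hx => Finset.mem_image_of_mem _ (Finset.mem_filter.1 hx).1
  · intro x hx y hy hxy
    obtain ⟨hxS, hxi⟩ := Finset.mem_filter.1 hx
    obtain ⟨hyS, hyi⟩ := Finset.mem_filter.1 hy
    exact hf i x hxS y hyS hxi hyi ((removeNth_eq_removeNth_iff_eqOn_compl i).1 hxy)

end Coverable

theorem not_coverable_piFinset {n : ℕ} {A : Finset ℕ} (hA : n + 1 < A.card) :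
    ¬ Coverable (Fintype.piFinset fun _ : Fin (n + 1) => A : Set (Fin (n + 1) → ℕ)) := by
  intro hgrid
  have image_subset (i : Fin (n + 1)) :
      (Fintype.piFinset fun _ : Fin (n + 1) => A).image i.removeNth ⊆
        Fintype.piFinset fun _ : Fin n => A :=
    Finset.image_subset_iff.2 fun x hx =>
      Fintype.mem_piFinset.2 fun j => Fintype.mem_piFinset.1 hx (i.succAbove j)
  have hcard : A.card ^ (n + 1) ≤ (n + 1) * A.card ^ n := by
    simpa using hgrid.card_le_sum_card_image_removeNth.trans
      (Finset.sum_le_sum fun i _ => Finset.card_le_card (image_subset i))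
  rw [pow_succ'] at hcard
  exact hA.not_ge (Nat.le_of_mul_le_mul_right hcard (pow_pos (Nat.zero_lt_of_lt hA) n))

/-- `CoverableUpTo d t` says that every set of at most `t` points of `ℕ^d` is coverable. For
`d ≠ 0` this is the condition `t ≤ h(ℕ^d)`; asking for at most `t` rather than exactly `t` points
makes no difference then. For `d = 0` it never holds: even `∅` is not `Coverable`, because there is
no map to `Fin 0`. -/
def CoverableUpTo (d t : ℕ) : Prop :=
  ∀ S : Finset (Fin d → ℕ), S.card ≤ t → Coverable (S : Set (Fin d → ℕ))

theorem coverableUpTo_iff_forall_ncard_eq {d t : ℕ} [NeZero d] :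
    CoverableUpTo d t ↔ ∀ S : Set (Fin d → ℕ), S.Finite → S.ncard = t → Coverable S := by
  refine ⟨fun h S hS hcard => ?_, fun h S hcard => ?_⟩
  · lift S to Finset (Fin d → ℕ) using hS
    rw [Set.ncard_coe_finset] at hcard
    exact h S hcard.le
  · obtain ⟨T, hST, hT⟩ := Infinite.exists_superset_card_eq S t hcard
    exact (h T T.finite_toSet (by rw [Set.ncard_coe_finset, hT])).mono (Finset.coe_subset.2 hST)

theorem coverableUpTo_zero (d : ℕ) [NeZero d] : CoverableUpTo d 0 := by
  intro S hS
  rw [Finset.card_eq_zero.1 (Nat.le_zero.1 hS), Finset.coe_empty]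
  exact ⟨fun _ => 0, fun _ hx => hx.elim⟩

theorem bddAbove_coverableUpTo (d : ℕ) [NeZero d] : BddAbove {t | CoverableUpTo d t} := by
  obtain ⟨n, rfl⟩ := Nat.exists_eq_succ_of_ne_zero (NeZero.ne d)
  refine ⟨(Fintype.piFinset fun _ : Fin (n + 1) => Finset.range (n + 2)).card, fun t ht => ?_⟩
  by_contra! hlt
  exact not_coverable_piFinset (by simp) (ht _ hlt.le)

theorem coverableUpTo_iff_le_hcov {d t : ℕ} [NeZero d] : CoverableUpTo d t ↔ t ≤ hcov d := by
  have hcov_eq : hcov d = sSup {t | CoverableUpTo d t} := by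
    simp only [hcov, coverableUpTo_iff_forall_ncard_eq]
  rw [hcov_eq]
  refine ⟨fun ht => le_csSup (bddAbove_coverableUpTo d) ht, fun ht S hS => ?_⟩
  exact Nat.sSup_mem ⟨0, coverableUpTo_zero d⟩ (bddAbove_coverableUpTo d) S (hS.trans ht)

theorem CoverableUpTo.succ {n h : ℕ} (hn : CoverableUpTo n h) :
    CoverableUpTo (n + 1) ((n + 2) * h + (n + 1)) := by
  intro S hS
  induction S using Finset.strongInduction with
  | H S ih =>
  by_cases hgrid : ∀ i : Fin (n + 1), (S.image (Function.eval i)).card ≤ n + 1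
  · refine Coverable.of_encard_image_eval_le fun i => ?_
    rw [← Finset.coe_image, Set.encard_coe_eq_coe_finsetCard]
    exact_mod_cast hgrid i
  · push Not at hgrid
    obtain ⟨i, hi⟩ := hgrid
    obtain ⟨c, hc, hthin⟩ : ∃ c ∈ S.image (Function.eval i), {x ∈ S | x i = c}.card < h + 1 :=
      Finset.exists_card_fiber_lt_of_card_lt_mul <| calc
        S.card < (n + 2) * (h + 1) := by linarith
        _ ≤ (S.image (Function.eval i)).card * (h + 1) := by gcongr; exact hi
    have hrest : {x ∈ S | x i ≠ c} ⊂ S := by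
      obtain ⟨x, hx, hxc⟩ := Finset.mem_image.1 hc
      exact Finset.filter_ssubset.2 ⟨x, hx, not_not.2 hxc⟩
    refine Coverable.of_layer i c ?_ ?_
    · simpa using hn ({x ∈ S | x i = c}.image i.removeNth)
        (Finset.card_image_le.trans (Nat.lt_succ_iff.1 hthin))
    · simpa using ih _ hrest ((Finset.card_le_card hrest.subset).trans hS)

/-- Recursive lower bound: `h(ℕ^d) ≥ (d+1)·h(ℕ^(d-1)) + d` for `d ≥ 2`; that is,
if every subset of `ℕ^(d-1)` of size `h` is coverable, then every subset of `ℕ^d`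
of size `(d+1)h + d` is coverable. -/
theorem hcov_recursive_lower (d : ℕ) (hd : 2 ≤ d) :
    (d + 1) * hcov (d - 1) + d ≤ hcov d ∧
    ∀ h : ℕ, (∀ S : Set (Fin (d - 1) → ℕ), S.Finite → S.ncard = h → Coverable S) →
      ∀ S : Set (Fin d → ℕ), S.Finite → S.ncard = (d + 1) * h + d → Coverable S := by
  obtain ⟨n, rfl⟩ := Nat.exists_eq_add_of_le' hd
  refine ⟨coverableUpTo_iff_le_hcov.1 (CoverableUpTo.succ (coverableUpTo_iff_le_hcov.2 le_rfl)),
    fun h hh => ?_⟩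
  have hn : CoverableUpTo (n + 1) h := coverableUpTo_iff_forall_ncard_eq.2 hh
  exact coverableUpTo_iff_forall_ncard_eq.1 hn.succ
end
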